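/- arXiv:2510.11265 — 6 statements merged into one kernel-verified Lean document; each statement's English description precedes it below -/
import Mathlib

section
/- Let T be a tree on n ≥ 2 vertices with diameter d and p pendant vertices. Then the induced matching number of T satisfies im(T) ≥ ⌊(n − p + d + 5)/6⌋. -/
open SimpleGraph

/-- An induced matching in `G`: a set of edges of `G` that are pairwise vertex-disjoint
and such that no edge of `G` joins endpoints of two distinct edges. -/
def SimpleGraph.IsInducedMatching {V : Type*} (G : SimpleGraph V) (M : Finset (Sym2 V)) : Prop :=
  (∀ e ∈ M, e ∈ G.edgeSet) ∧
    ∀ e ∈ M, ∀ f ∈ M, e ≠ f → ∀ u ∈ e, ∀ v ∈ f, u ≠ v ∧ ¬ G.Adj u v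

/-- The induced matching number of `G`: the maximum size of an induced matching. -/
noncomputable def SimpleGraph.inducedMatchingNum {V : Type*} (G : SimpleGraph V) : ℕ :=
  sSup {n | ∃ M : Finset (Sym2 V), G.IsInducedMatching M ∧ M.card = n}

/-- The number of pendant vertices (leaves, i.e. vertices of degree one) of `G`. -/
noncomputable def SimpleGraph.pendantCount {V : Type*} [Fintype V] (G : SimpleGraph V)
    [DecidableRel G.Adj] : ℕ :=
  {v : V | G.degree v = 1}.ncard

/-- A rooted description of a tree: parent function and depth. -/
theorem tree_exists_parent {V : Type*} (G : SimpleGraph V) (hT : G.IsTree) (r : V) :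
    ∃ (par : V → V) (dep : V → ℕ),
      (∀ a b, G.Adj a b ↔ (a ≠ r ∧ par a = b) ∨ (b ≠ r ∧ par b = a)) ∧
      (∀ v, v ≠ r → dep v = dep (par v) + 1) := by
  have hc := hT.connected
  choose p hp hl using fun v => hc.exists_path_of_dist r v
  have key : ∀ u v, G.Adj u v → G.dist r v = G.dist r u + 1 → (p v).penultimate = u := by
    intro u v huv hd
    have h1 : ((p u).concat huv).IsPath := by
      apply Walk.isPath_of_length_eq_dist
      rw [Walk.length_concat, hl, hd]
    have h2 : p v = (p u).concat huv :=
      (hT.existsUnique_path r v).unique (hp v) h1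
    rw [h2]
    simp
  have hpar : ∀ v, v ≠ r → G.Adj (p v).penultimate v := by
    intro v hv
    apply Walk.adj_penultimate
    intro hn
    exact hv hn.eq.symm
  have hdp : ∀ v, v ≠ r → G.dist r v = G.dist r (p v).penultimate + 1 := by
    intro v hv
    have hadj := hpar v hv
    have hlt : G.dist r (p v).penultimate ≤ G.dist r v - 1 := by
      have h := dist_le (p v).dropLast
      rw [Walk.length_dropLast, hl] at h
      exact h
    have hpos := hc.pos_dist_of_ne (Ne.symm hv)
    rcases hT.dist_eq_dist_add_one_of_adj r hadj with h | h <;> omega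
  refine ⟨fun v => (p v).penultimate, fun v => G.dist r v, ?_, hdp⟩
  intro a b
  constructor
  · intro hab
    rcases hT.dist_eq_dist_add_one_of_adj r hab with h | h
    · left
      refine ⟨?_, key b a hab.symm h⟩
      rintro rfl
      simp at h
    · right
      refine ⟨?_, key a b hab h⟩
      rintro rfl
      simp at h
  · rintro (⟨h, rfl⟩ | ⟨h, rfl⟩)
    · exact (hpar a h).symm
    · exact hpar b h

/-- Greedy duality between induced matchings and covers by edges.  The vertex `v ≠ r`
stands for the edge joining `v` to its parent. -/
theorem tree_greedy {V : Type*} [DecidableEq V] (G : SimpleGraph V) (r : V) (par : V → V)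
    (dep : V → ℕ)
    (hA : ∀ a b, G.Adj a b ↔ (a ≠ r ∧ par a = b) ∨ (b ≠ r ∧ par b = a))
    (hdep : ∀ v, v ≠ r → dep v = dep (par v) + 1) :
    ∀ (n : ℕ) (F : Finset V), F.card = n → r ∉ F → ∃ M K : Finset V, M ⊆ F ∧ r ∉ K ∧
      K.card ≤ M.card ∧
      (∀ x ∈ M, ∀ y ∈ M, x ≠ y → ∀ a, a = x ∨ a = par x → ∀ b, b = y ∨ b = par y →
        a ≠ b ∧ ¬ G.Adj a b) ∧
      (∀ v ∈ F, ∃ k ∈ K, v = k ∨ v = par k ∨ par v = k ∨ par v = par k) := by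
  intro n
  induction n using Nat.strong_induction_on with
  | _ n ih =>
  intro F hF hr
  rcases F.eq_empty_or_nonempty with rfl | hne
  · exact ⟨∅, ∅, by simp⟩
  obtain ⟨v, hv, hmax⟩ := F.exists_max_image dep hne
  have hvr : v ≠ r := fun h => hr (h ▸ hv)
  obtain ⟨k, hkr, hkv, hk⟩ : ∃ k, k ≠ r ∧ (par v = k ∨ par v = par k) ∧
      (par v = r ∧ k = v ∨ par v ≠ r ∧ k = par v) := by
    by_cases h : par v = r
    · exact ⟨v, hvr, Or.inr rfl, Or.inl ⟨h, rfl⟩⟩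
    · exact ⟨par v, h, Or.inl rfl, Or.inr ⟨h, rfl⟩⟩
  set F' := F.filter (fun x => ¬ (x = k ∨ x = par k ∨ par x = k ∨ par x = par k)) with hF'
  have hvF' : v ∉ F' := by
    simp only [hF', Finset.mem_filter, not_and, not_not]
    intro _
    tauto
  have hsub : F' ⊆ F := Finset.filter_subset _ _
  have hcard : F'.card < n := by
    rw [← hF]
    exact Finset.card_lt_card ⟨hsub, fun h => hvF' (h hv)⟩
  obtain ⟨M, K, hM, hrK, hKM, hind, hcov⟩ := ih _ hcard F' rfl (fun h => hr (hsub h))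
  have hfar : ∀ x ∈ F', ∀ a, a = v ∨ a = par v → ∀ b, b = x ∨ b = par x →
      a ≠ b ∧ ¬ G.Adj a b := by
    intro x hx
    have hxF := hsub hx
    have hxr : x ≠ r := fun h => hr (h ▸ hxF)
    have hle := hmax x hxF
    have hx2 := (Finset.mem_filter.1 hx).2
    push Not at hx2
    obtain ⟨h1, h2, h3, h4⟩ := hx2
    have hd1 := hdep v hvr
    have hd2 := hdep x hxr
    have hd3 := hdep (par v)
    have hd4 := hdep (par x)
    have hxv : x ≠ par v := by grind
    have hpxv : par x ≠ par v := by grind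
    have hpx : par x ≠ v := by
      intro h; rw [h] at hd2; omega
    have hxv' : x ≠ v := by grind
    intro a ha b hb
    rw [hA]
    rcases ha with rfl | rfl <;> rcases hb with rfl | rfl <;> refine ⟨by grind, ?_⟩ <;> grind
  have hvM : v ∉ M := fun h => hvF' (hM h)
  refine ⟨insert v M, insert k K, ?_, ?_, ?_, ?_, ?_⟩
  · exact Finset.insert_subset hv (hM.trans hsub)
  · simp only [Finset.mem_insert, not_or]
    exact ⟨hkr.symm, hrK⟩
  · rw [Finset.card_insert_of_notMem hvM]
    exact (Finset.card_insert_le _ _).trans (by omega)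
  · intro x hx y hy hxy a ha b hb
    rcases Finset.mem_insert.1 hx with rfl | hx
    · rcases Finset.mem_insert.1 hy with rfl | hy
      · exact absurd rfl hxy
      · exact hfar y (hM hy) a ha b hb
    · rcases Finset.mem_insert.1 hy with rfl | hy
      · have := hfar x (hM ‹x ∈ M›) b hb a ha
        exact ⟨this.1.symm, fun h => this.2 h.symm⟩
      · exact hind x ‹x ∈ M› y ‹y ∈ M› hxy a ha b hb
  · intro x hx
    by_cases hxk : x = k ∨ x = par k ∨ par x = k ∨ par x = par k
    · exact ⟨k, Finset.mem_insert_self _ _, hxk⟩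
    · obtain ⟨j, hj, h⟩ := hcov x (Finset.mem_filter.2 ⟨hx, hxk⟩)
      exact ⟨j, Finset.mem_insert_of_mem hj, h⟩

/-- The number of internal vertices is less than three times the induced matching number. -/
theorem tree_internal_lt {V : Type*} [Fintype V] [DecidableEq V] (G : SimpleGraph V)
    [DecidableRel G.Adj] (hT : G.IsTree) (hn2 : 2 ≤ Fintype.card V) :
    (Finset.univ.filter (fun v => G.degree v ≠ 1)).card + 1 ≤ 3 * G.inducedMatchingNum := by
  have : Nontrivial V := Fintype.one_lt_card_iff_nontrivial.1 hn2
  obtain ⟨r, hr⟩ := hT.exists_vert_degree_one_of_nontrivial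
  obtain ⟨par, dep, hA, hdep⟩ := tree_exists_parent G hT r
  obtain ⟨M, K, hM, hrK, hKM, hind, hcov⟩ :=
    tree_greedy G r par dep hA hdep _ (Finset.univ.erase r) rfl (by simp)
  have hMr : ∀ x ∈ M, x ≠ r := fun x hx => (Finset.mem_erase.1 (hM hx)).1
  -- the induced matching
  have him : M.card ≤ G.inducedMatchingNum := by
    unfold SimpleGraph.inducedMatchingNum
    apply le_csSup
    · refine ⟨Fintype.card (Sym2 V), ?_⟩
      rintro n ⟨N, -, rfl⟩
      exact Finset.card_le_univ N
    · refine ⟨M.image (fun x => s(x, par x)), ⟨?_, ?_⟩, ?_⟩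
      · intro e he
        obtain ⟨x, hx, rfl⟩ := Finset.mem_image.1 he
        rw [SimpleGraph.mem_edgeSet, hA]
        exact Or.inl ⟨hMr x hx, rfl⟩
      · intro e he f hf hef u hu v hv
        obtain ⟨x, hx, rfl⟩ := Finset.mem_image.1 he
        obtain ⟨y, hy, rfl⟩ := Finset.mem_image.1 hf
        have hxy : x ≠ y := by
          rintro rfl
          exact hef rfl
        exact hind x hx y hy hxy u (Sym2.mem_iff.1 hu) v (Sym2.mem_iff.1 hv)
      · apply Finset.card_image_of_injOn
        intro x hx y hy hxy
        by_contra hne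
        have h1 := (hind x hx y hy hne x (Or.inl rfl))
        have hx' : x ∈ s(y, par y) := by
          have : x ∈ s(x, par x) := Sym2.mem_mk_left _ _
          simpa only [hxy] using (show x ∈ (fun x => s(x, par x)) x from this)
        exact (h1 x (Sym2.mem_iff.1 hx')).1 rfl
  -- the vertex cover
  set C := K ∪ K.image par with hC
  have hCcard : C.card ≤ 2 * K.card := by
    have h1 := Finset.card_union_le K (K.image par)
    have h2 := Finset.card_image_le (s := K) (f := par)
    rw [← hC] at h1
    omega
  have hKC : ∀ k ∈ K, k ∈ C ∧ par k ∈ C := fun k hk =>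
    ⟨Finset.mem_union_left _ hk, Finset.mem_union_right _ (Finset.mem_image_of_mem _ hk)⟩
  have hcover : ∀ v, v ≠ r → v ∈ C ∨ par v ∈ C := by
    intro v hv
    obtain ⟨k, hk, h⟩ := hcov v (by simp [hv])
    have := hKC k hk
    rcases h with h | h | h | h <;> rw [h] <;> tauto
  set I := Finset.univ.filter (fun v => G.degree v ≠ 1) with hI
  set Q := I \ C with hQ
  have hchild : ∀ x ∈ Q, ∃ y, y ≠ r ∧ par y = x ∧ y ∈ C := by
    intro x hx
    obtain ⟨hxI, hxC⟩ := Finset.mem_sdiff.1 hx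
    have hdeg : G.degree x ≠ 1 := (Finset.mem_filter.1 hxI).2
    have hxr : x ≠ r := by
      rintro rfl
      exact hdeg hr
    have hadj : G.Adj x (par x) := (hA _ _).2 (Or.inl ⟨hxr, rfl⟩)
    have hpos : 0 < G.degree x := (G.degree_pos_iff_exists_adj x).2 ⟨_, hadj⟩
    have h2 : 1 < (G.neighborFinset x).card := by
      rw [G.card_neighborFinset_eq_degree]; omega
    obtain ⟨y, hy, hyne⟩ := Finset.exists_mem_ne h2 (par x)
    rw [SimpleGraph.mem_neighborFinset, hA] at hy
    have hy' : y ≠ r ∧ par y = x := by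
      rcases hy with h | h
      · exact absurd h.2.symm hyne
      · exact h
    refine ⟨y, hy'.1, hy'.2, ?_⟩
    rcases hcover y hy'.1 with h | h
    · exact h
    · rw [hy'.2] at h
      exact absurd h hxC
  choose! ch hch1 hch2 hch3 using hchild
  have hchinj : Set.InjOn ch Q := by
    intro x hx y hy h
    rw [← hch2 x hx, ← hch2 y hy, h]
  have hdisj : Disjoint K (Q.image ch) := by
    rw [Finset.disjoint_left]
    intro k hk hk'
    obtain ⟨x, hx, rfl⟩ := Finset.mem_image.1 hk'
    have := (hKC _ hk).2
    rw [hch2 x hx] at this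
    exact (Finset.mem_sdiff.1 hx).2 this
  -- a vertex of the cover that is not hit
  obtain ⟨z, hzC, hzK, hzQ⟩ : ∃ z ∈ C, z ∉ K ∧ z ∉ Q.image ch := by
    by_cases hrC : r ∈ C
    · refine ⟨r, hrC, hrK, ?_⟩
      intro h
      obtain ⟨x, hx, h⟩ := Finset.mem_image.1 h
      exact hch1 x hx h
    · have hpos : 0 < G.degree r := by omega
      obtain ⟨c, hc⟩ := (G.degree_pos_iff_exists_adj r).1 hpos
      rw [hA] at hc
      have hc' : c ≠ r ∧ par c = r := by
        rcases hc with h | h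
        · exact absurd rfl h.1
        · exact h
      refine ⟨c, ?_, ?_, ?_⟩
      · rcases hcover c hc'.1 with h | h
        · exact h
        · rw [hc'.2] at h
          exact absurd h hrC
      · intro h
        have := (hKC c h).2
        rw [hc'.2] at this
        exact hrC this
      · intro h
        obtain ⟨x, hx, h⟩ := Finset.mem_image.1 h
        have h3 := hch2 x hx
        rw [h, hc'.2] at h3
        have := (Finset.mem_filter.1 (Finset.mem_sdiff.1 hx).1).2
        rw [← h3] at this
        exact this hr
  have hcount : K.card + Q.card + 1 ≤ C.card := by
    have h1 : insert z (K ∪ Q.image ch) ⊆ C := by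
      intro y hy
      rcases Finset.mem_insert.1 hy with rfl | hy
      · exact hzC
      · rcases Finset.mem_union.1 hy with hy | hy
        · exact (hKC y hy).1
        · obtain ⟨x, hx, rfl⟩ := Finset.mem_image.1 hy
          exact hch3 x hx
    have h2 := Finset.card_le_card h1
    rw [Finset.card_insert_of_notMem (by simp only [Finset.mem_union, not_or]; exact ⟨hzK, hzQ⟩),
      Finset.card_union_of_disjoint hdisj, Finset.card_image_of_injOn hchinj] at h2
    exact h2
  have hIle : I.card ≤ Q.card + C.card := by
    have h1 : I ⊆ Q ∪ C := by
      intro x hx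
      by_cases h : x ∈ C
      · exact Finset.mem_union_right _ h
      · exact Finset.mem_union_left _ (Finset.mem_sdiff.2 ⟨hx, h⟩)
    exact (Finset.card_le_card h1).trans (Finset.card_union_le _ _)
  omega

/-- The diameter is at most the number of internal vertices plus one. -/
theorem tree_diam_le {V : Type*} [Fintype V] [DecidableEq V] (G : SimpleGraph V)
    [DecidableRel G.Adj] (hT : G.IsTree) :
    G.diam ≤ (Finset.univ.filter (fun v => G.degree v ≠ 1)).card + 1 := by
  have hne : Nonempty V := hT.connected.nonempty
  obtain ⟨u, v, huv⟩ := G.exists_dist_eq_diam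
  obtain ⟨p, hp, hl⟩ := hT.connected.exists_path_of_dist u v
  rw [huv] at hl
  have hinj := hp.getVert_injOn
  have h1 : (Finset.Ico 1 p.length).image p.getVert ⊆
      Finset.univ.filter (fun v => G.degree v ≠ 1) := by
    intro x hx
    obtain ⟨i, hi, rfl⟩ := Finset.mem_image.1 hx
    rw [Finset.mem_Ico] at hi
    obtain ⟨j, rfl⟩ : ∃ j, i = j + 1 := ⟨i - 1, by omega⟩
    have ha := p.adj_getVert_succ (i := j) (by omega)
    have hb := p.adj_getVert_succ (i := j + 1) (by omega)
    have hne : p.getVert j ≠ p.getVert (j + 1 + 1) := by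
      intro h
      have := hinj (by simp; omega) (by simp; omega) h
      omega
    have h2 : 1 < (G.neighborFinset (p.getVert (j + 1))).card := by
      rw [Finset.one_lt_card]
      exact ⟨_, by simpa using ha.symm, _, by simpa using hb, hne⟩
    rw [G.card_neighborFinset_eq_degree] at h2
    simp only [Finset.mem_filter, Finset.mem_univ, true_and]
    omega
  have h2 := Finset.card_le_card h1
  rw [Finset.card_image_of_injOn, Nat.card_Ico] at h2
  · omega
  · intro a ha b hb h
    simp only [Finset.coe_Ico, Set.mem_Ico] at ha hb
    exact hinj (by simp; omega) (by simp; omega) h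

/-- Lower bound for the induced matching number of a tree:
`im(T) ≥ ⌊(n − p + d + 5)/6⌋`. -/
theorem tree_im_lower_bound {V : Type*} [Fintype V] (G : SimpleGraph V)
    [DecidableRel G.Adj] (hT : G.IsTree)
    (n d p : ℕ) (hn : n = Fintype.card V) (hn2 : 2 ≤ n)
    (hd : d = G.diam) (hp : p = G.pendantCount) :
    ⌊(((n : ℚ) - p + d + 5) / 6 : ℚ)⌋ ≤ (G.inducedMatchingNum : ℤ) := by
  classical
  have h1 := tree_internal_lt G hT (hn ▸ hn2)
  have h2 := tree_diam_le G hT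
  have h3 : p = (Finset.univ.filter (fun v => G.degree v = 1)).card := by
    rw [hp, SimpleGraph.pendantCount, ← Set.ncard_coe_finset]
    simp
  have h4 := Finset.card_filter_add_card_filter_not (s := (Finset.univ : Finset V))
    (fun v => G.degree v = 1)
  rw [Finset.card_univ, ← hn, ← h3] at h4
  have h5 : n + d + 1 ≤ 6 * G.inducedMatchingNum + p := by
    simp only [ne_eq] at h1 h2
    omega
  have h6 : (n : ℚ) + d + 1 ≤ 6 * (G.inducedMatchingNum : ℚ) + p := by exact_mod_cast h5
  rw [← Int.lt_add_one_iff, Int.floor_lt]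
  push_cast
  linarith
end

section
/- Let T be a tree on n ≥ 2 vertices with diameter d. Then the independence number of T satisfies α(T) ≤ ⌈(2n − d − 1)/2⌉. -/
open SimpleGraph

/-- The independence number of `G`: the maximum size of a set of pairwise
non-adjacent vertices. -/
noncomputable def SimpleGraph.indepNumber {V : Type*} (G : SimpleGraph V) : ℕ :=
  sSup {n | ∃ s : Finset V, (∀ u ∈ s, ∀ v ∈ s, ¬ G.Adj u v) ∧ s.card = n}

/-- Upper bound for the independence number of a tree:
`α(T) ≤ ⌈(2n − d − 1)/2⌉`. -/
theorem tree_indepNumber_le_ceil {V : Type*} [Fintype V] (G : SimpleGraph V)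
    (hT : G.IsTree)
    (n d : ℕ) (hn : n = Fintype.card V) (hn2 : 2 ≤ n) (hd : d = G.diam) :
    (G.indepNumber : ℤ) ≤ ⌈((2 * (n : ℚ) - d - 1) / 2 : ℚ)⌉ := by
  classical
  have hcard : ∀ s : Finset V, (∀ u ∈ s, ∀ v ∈ s, ¬ G.Adj u v) →
      s.card + (d + 1) / 2 ≤ n := by
    intro s hs
    haveI : Nonempty V := hT.connected.nonempty
    obtain ⟨u, v, huv⟩ := G.exists_dist_eq_diam
    obtain ⟨p, hp, hlen⟩ := hT.connected.exists_path_of_dist u v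
    have hl : p.length = d := by omega
    have hinj := hp.getVert_injOn
    have key : (Finset.range ((d + 1) / 2)).card ≤ sᶜ.card := by
      refine Finset.card_le_card_of_injOn
        (fun i => if p.getVert (2 * i) ∈ s then p.getVert (2 * i + 1) else p.getVert (2 * i))
        ?_ ?_
      · intro i hi
        have hi' : i < (d + 1) / 2 := by simpa using hi
        have hadj : G.Adj (p.getVert (2 * i)) (p.getVert (2 * i + 1)) :=
          p.adj_getVert_succ (by omega)
        by_cases h : p.getVert (2 * i) ∈ s
        · simp only [h, if_true, Finset.coe_compl, Set.mem_compl_iff, Finset.mem_coe]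
          exact fun h' => hs _ h _ h' hadj
        · simp [h]
      · intro i hi j hj hij
        have hi' : i < (d + 1) / 2 := by simpa using hi
        have hj' : j < (d + 1) / 2 := by simpa using hj
        have inj : ∀ a b, a ≤ d → b ≤ d → p.getVert a = p.getVert b → a = b := by
          intro a b ha hb hab
          exact hinj (by simp; omega) (by simp; omega) hab
        dsimp only at hij
        split_ifs at hij <;>
        · have := inj _ _ (by omega) (by omega) hij
          omega
    have h2 := Finset.card_add_card_compl s
    rw [Finset.card_range] at key
    omega
  have hα : G.indepNumber + (d + 1) / 2 ≤ n := by
    have hmem : G.indepNumber ∈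
        {n | ∃ s : Finset V, (∀ u ∈ s, ∀ v ∈ s, ¬ G.Adj u v) ∧ s.card = n} := by
      refine Nat.sSup_mem ⟨0, ∅, by simp, by simp⟩ ⟨n, ?_⟩
      rintro m ⟨s, hs, rfl⟩
      have := hcard s hs
      omega
    obtain ⟨s, hs, hsc⟩ := hmem
    rw [← hsc]
    exact hcard s hs
  have h1 : (G.indepNumber : ℤ) - 1 < ((2 * (n : ℚ) - d - 1) / 2 : ℚ) := by
    have h3 : 2 * G.indepNumber + d ≤ 2 * n := by omega
    have h4 : 2 * (G.indepNumber : ℚ) + d ≤ 2 * n := by exact_mod_cast h3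
    push_cast
    linarith
  have h2 : (G.indepNumber : ℤ) - 1 < ⌈((2 * (n : ℚ) - d - 1) / 2 : ℚ)⌉ := by
    rw [Int.lt_ceil]
    push_cast at h1 ⊢
    exact h1
  omega
end

section
/- Let T be a tree on n ≥ 2 vertices with p pendant vertices. Then the independence number of T satisfies α(T) ≤ ⌊(2n + p − 2)/3⌋. -/
open SimpleGraph

/-- Upper bound for the independence number of a tree:
`α(T) ≤ ⌊(2n + p − 2)/3⌋`. -/
theorem tree_indepNumber_le_floor {V : Type*} [Fintype V] (G : SimpleGraph V)
    [DecidableRel G.Adj] (hT : G.IsTree)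
    (n p : ℕ) (hn : n = Fintype.card V) (hn2 : 2 ≤ n)
    (hp : p = G.pendantCount) :
    (G.indepNumber : ℤ) ≤ ⌊((2 * (n : ℚ) + p - 2) / 3 : ℚ)⌋ := by
  classical
  have hcard : Fintype.card V = n := hn.symm
  have hp' : p = (Finset.univ.filter (fun v : V => G.degree v = 1)).card := by
    rw [hp, SimpleGraph.pendantCount, ← Set.ncard_coe_finset]
    congr 1
    ext v
    simp
  have : Nontrivial V := Fintype.one_lt_card_iff_nontrivial.mp (by omega)
  have hdeg : ∀ v : V, 0 < G.degree v := fun v => hT.connected.preconnected.degree_pos_of_nontrivial v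
  have hE : G.edgeFinset.card + 1 = n := by rw [← hcard]; exact hT.card_edgeFinset
  have hsum : ∑ v : V, G.degree v = 2 * G.edgeFinset.card := G.sum_degrees_eq_twice_card_edges
  have hpoint : ∀ v : V, 2 ≤ G.degree v + (if G.degree v = 1 then 1 else 0) := by
    intro v
    have := hdeg v
    split_ifs <;> omega
  have hpsum : p = ∑ v : V, (if G.degree v = 1 then 1 else 0) := by
    rw [hp', Finset.card_filter]
  have hp2 : 2 * n ≤ 2 * G.edgeFinset.card + p := by
    rw [← hsum, hpsum, ← Finset.sum_add_distrib, ← hcard, mul_comm, ← Finset.card_univ,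
      ← smul_eq_mul]
    exact Finset.card_nsmul_le_sum _ _ _ (fun v _ => hpoint v)
  have hple : p ≤ n := by
    rw [hp', ← hcard]; exact Finset.card_le_univ _
  have hpn : p = n → n = 2 := by
    intro h
    have hall : (Finset.univ.filter (fun v : V => G.degree v = 1)) = Finset.univ := by
      apply Finset.eq_univ_of_card
      omega
    have h1 : ∑ v : V, G.degree v = n := by
      have hone : ∀ v : V, G.degree v = 1 := by
        intro v
        have hv : v ∈ Finset.univ.filter (fun v : V => G.degree v = 1) := by
          rw [hall]; exact Finset.mem_univ v
        exact (Finset.mem_filter.mp hv).2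
      simp [hone, hcard]
    omega
  have hS : ∀ S : Finset V, (∀ u ∈ S, ∀ v ∈ S, ¬ G.Adj u v) → 3 * S.card + 2 ≤ 2 * n + p := by
    intro S hS
    have h1 : ∑ v ∈ S, G.degree v ≤ G.edgeFinset.card := by
      have : ∑ v ∈ S, G.degree v = (S.biUnion (fun v => G.incidenceFinset v)).card := by
        rw [Finset.card_biUnion]
        · simp
        · intro u hu v hv huv
          refine Finset.disjoint_left.mpr ?_
          intro e heu hev
          rw [SimpleGraph.mem_incidenceFinset] at heu hev
          exact hS u hu v hv (G.adj_of_mem_incidenceSet huv heu hev)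
      rw [this]
      apply Finset.card_le_card
      intro e he
      obtain ⟨v, _, hv⟩ := Finset.mem_biUnion.mp he
      rw [SimpleGraph.mem_incidenceFinset] at hv
      exact SimpleGraph.mem_edgeFinset.mpr hv.1
    have h2 : ∑ v ∈ S, (if G.degree v = 1 then 1 else 0) ≤ p := by
      rw [hpsum]
      exact Finset.sum_le_sum_of_subset (Finset.subset_univ S)
    have h3 : S.card * 2 ≤ ∑ v ∈ S, G.degree v + ∑ v ∈ S, (if G.degree v = 1 then 1 else 0) := by
      rw [← Finset.sum_add_distrib, ← smul_eq_mul]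
      exact Finset.card_nsmul_le_sum _ _ _ (fun v _ => hpoint v)
    by_cases hc : p = n
    · have := hpn hc
      omega
    · omega
  have hα : 3 * G.indepNumber + 2 ≤ 2 * n + p := by
    have hmem : G.indepNumber ∈
        {n | ∃ s : Finset V, (∀ u ∈ s, ∀ v ∈ s, ¬ G.Adj u v) ∧ s.card = n} := by
      apply Nat.sSup_mem
      · exact ⟨0, ∅, by simp, by simp⟩
      · refine ⟨Fintype.card V, ?_⟩
        rintro m ⟨s, _, rfl⟩
        exact Finset.card_le_univ s
    obtain ⟨s, hs, hsc⟩ := hmem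
    rw [← hsc]
    exact hS s hs
  rw [Int.le_floor]
  have hq : (3 * (G.indepNumber : ℚ) + 2) ≤ 2 * n + p := by exact_mod_cast hα
  push_cast
  linarith
end

section
/- Let T be a tree on n ≥ 2 vertices with diameter d and p pendant vertices, and let T₁ be the whiskered tree obtained from T by attaching one new pendant vertex to each vertex of T. Then the induced matching number of T₁ satisfies im(T₁) ≤ min{⌈(2n − d − 1)/2⌉, ⌊(2n + p − 2)/3⌋}. -/
open SimpleGraph

/-- The whiskered graph `G₁`: attach one new pendant vertex to each vertex of `G`. -/
def SimpleGraph.whisker {V : Type*} (G : SimpleGraph V) : SimpleGraph (V ⊕ V) :=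
  SimpleGraph.fromRel fun x y =>
    match x, y with
    | Sum.inl u, Sum.inl v => G.Adj u v
    | Sum.inl u, Sum.inr v => u = v
    | _, _ => False

/-- The multi-whiskered graph `G_a`: attach `a v` new pendant vertices to each vertex `v`
of `G`. -/
def SimpleGraph.multiWhisker {V : Type*} (G : SimpleGraph V) (a : V → ℕ) :
    SimpleGraph (V ⊕ Σ v : V, Fin (a v)) :=
  SimpleGraph.fromRel fun x y =>
    match x, y with
    | Sum.inl u, Sum.inl v => G.Adj u v
    | Sum.inl u, Sum.inr w => u = w.1
    | _, _ => False

/-- Every edge of the whiskered graph has an original vertex as an endpoint. -/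
theorem whisker_exists_inl {V : Type*} (G : SimpleGraph V) (e : Sym2 (V ⊕ V))
    (he : e ∈ G.whisker.edgeSet) : ∃ u : V, Sum.inl u ∈ e := by
  induction e using Sym2.ind with
  | _ x y =>
    rw [SimpleGraph.mem_edgeSet] at he
    rcases x with x | x
    · exact ⟨x, by simp⟩
    · rcases y with y | y
      · exact ⟨y, by simp⟩
      · simp [SimpleGraph.whisker] at he

/-- An induced matching of the whiskered graph gives an independent set of the same size. -/
theorem exists_indep_of_matching {V : Type*} (G : SimpleGraph V) (M : Finset (Sym2 (V ⊕ V)))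
    (hM : G.whisker.IsInducedMatching M) :
    ∃ S : Finset V, S.card = M.card ∧ ∀ u ∈ S, ∀ v ∈ S, ¬ G.Adj u v := by
  classical
  obtain ⟨h1, h2⟩ := hM
  choose f hf using fun e : {e // e ∈ M} => whisker_exists_inl G e.1 (h1 e.1 e.2)
  refine ⟨M.attach.image f, ?_, ?_⟩
  · rw [Finset.card_image_of_injective, Finset.card_attach]
    intro a b hab
    by_contra hne
    have := (h2 a.1 a.2 b.1 b.2 (fun h => hne (Subtype.ext h)) _ (hf a) _ (hf b)).1
    exact this (by rw [hab])
  · intro u hu v hv huv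
    simp only [Finset.mem_image, Finset.mem_attach, true_and] at hu hv
    obtain ⟨a, rfl⟩ := hu
    obtain ⟨b, rfl⟩ := hv
    by_cases hab : a = b
    · subst hab
      exact G.loopless.irrefl _ huv
    · refine (h2 a.1 a.2 b.1 b.2 (fun h => hab (Subtype.ext h)) _ (hf a) _ (hf b)).2 ?_
      simp [SimpleGraph.whisker, huv, huv.ne]

/-- The diameter bound for independent sets. -/
theorem indep_diam_bound {V : Type*} [Fintype V] (G : SimpleGraph V) (hc : G.Connected)
    (S : Finset V) (hS : ∀ u ∈ S, ∀ v ∈ S, ¬ G.Adj u v) :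
    S.card + (G.diam + 1) / 2 ≤ Fintype.card V := by
  classical
  have := hc.nonempty
  obtain ⟨u, v, huv⟩ := G.exists_dist_eq_diam
  obtain ⟨w, hw, hl⟩ := hc.exists_path_of_dist u v
  rw [huv] at hl
  have key : ∀ i : ℕ, ∃ j, i < (G.diam + 1) / 2 →
      (j = 2 * i ∨ j = 2 * i + 1) ∧ w.getVert j ∉ S := by
    intro i
    by_cases hi : i < (G.diam + 1) / 2
    · by_cases h : w.getVert (2 * i) ∈ S
      · refine ⟨2 * i + 1, fun _ => ⟨Or.inr rfl, fun h' => ?_⟩⟩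
        exact hS _ h _ h' (w.adj_getVert_succ (by omega))
      · exact ⟨2 * i, fun _ => ⟨Or.inl rfl, h⟩⟩
    · exact ⟨0, fun h => absurd h hi⟩
  choose g hg using key
  have hcard : (Finset.range ((G.diam + 1) / 2)).card ≤ Sᶜ.card := by
    refine Finset.card_le_card_of_injOn (fun i => w.getVert (g i)) ?_ ?_
    · intro i hi
      have hi' : i < (G.diam + 1) / 2 := by simpa using hi
      simpa using (hg i hi').2
    · intro i hi j hj hij
      have hi' : i < (G.diam + 1) / 2 := by simpa using hi
      have hj' : j < (G.diam + 1) / 2 := by simpa using hj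
      have h1 := (hg i hi').1
      have h2 := (hg j hj').1
      have := hw.getVert_injOn (show g i ≤ w.length by omega) (show g j ≤ w.length by omega) hij
      omega
  rw [Finset.card_range] at hcard
  have := S.card_add_card_compl
  omega

/-- The pendant vertex bound for independent sets. -/
theorem indep_pendant_bound {V : Type*} [Fintype V] (G : SimpleGraph V) [DecidableRel G.Adj]
    (hT : G.IsTree) (h2 : 2 ≤ Fintype.card V)
    (S : Finset V) (hS : ∀ u ∈ S, ∀ v ∈ S, ¬ G.Adj u v) :
    3 * S.card + 2 ≤ 2 * Fintype.card V + G.pendantCount := by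
  classical
  have : Nontrivial V := Fintype.one_lt_card_iff_nontrivial.mp h2
  have hdeg : ∀ v, 1 ≤ G.degree v := fun v => hT.connected.preconnected.degree_pos_of_nontrivial v
  have hlt : S.card < Fintype.card V := by
    rw [Finset.card_lt_iff_ne_univ]
    rintro rfl
    obtain ⟨v⟩ := hT.connected.nonempty
    obtain ⟨w, hw⟩ := (G.degree_pos_iff_exists_adj v).mp (hdeg v)
    exact hS v (Finset.mem_univ _) w (Finset.mem_univ _) hw
  have hE := hT.card_edgeFinset
  have hsum : ∑ v ∈ S, G.degree v ≤ G.edgeFinset.card := by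
    simp_rw [← G.card_incidenceFinset_eq_degree]
    rw [← Finset.card_biUnion]
    · refine Finset.card_le_card (Finset.biUnion_subset.mpr fun v _ => ?_)
      exact G.incidenceFinset_subset v
    · intro u hu v hv huv
      refine Finset.disjoint_left.mpr ?_
      intro e he he'
      rw [SimpleGraph.mem_incidenceFinset] at he he'
      exact hS u hu v hv (G.adj_of_mem_incidenceSet huv he he')
  have hlow : 2 * S.card ≤ ∑ v ∈ S, G.degree v + (S.filter fun v => G.degree v = 1).card := by
    rw [Finset.card_filter, ← Finset.sum_add_distrib, mul_comm, ← smul_eq_mul]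
    refine Finset.card_nsmul_le_sum _ _ _ fun v _ => ?_
    have := hdeg v
    split_ifs <;> omega
  have hp : (S.filter fun v => G.degree v = 1).card ≤ G.pendantCount := by
    unfold SimpleGraph.pendantCount
    rw [← Set.ncard_coe_finset]
    exact Set.ncard_le_ncard (fun v hv => by simpa using (Finset.mem_filter.mp hv).2)
      (Set.toFinite _)
  omega

/-- Upper bound for the induced matching number of the whiskered tree `T₁`:
`im(T₁) ≤ min{⌈(2n − d − 1)/2⌉, ⌊(2n + p − 2)/3⌋}`. -/
theorem whiskered_tree_im_upper_bound {V : Type*} [Fintype V] (G : SimpleGraph V)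
    [DecidableRel G.Adj] (hT : G.IsTree)
    (n d p : ℕ) (hn : n = Fintype.card V) (hn2 : 2 ≤ n)
    (hd : d = G.diam) (hp : p = G.pendantCount) :
    (G.whisker.inducedMatchingNum : ℤ) ≤
      min ⌈((2 * (n : ℚ) - d - 1) / 2 : ℚ)⌉ ⌊((2 * (n : ℚ) + p - 2) / 3 : ℚ)⌋ := by
  obtain ⟨M, hM, hcard⟩ : G.whisker.inducedMatchingNum ∈
      {n | ∃ M : Finset (Sym2 (V ⊕ V)), G.whisker.IsInducedMatching M ∧ M.card = n} := by
    classical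
    refine Nat.sSup_mem ⟨0, ∅, ⟨by simp, by simp⟩, rfl⟩ ⟨Fintype.card (Sym2 (V ⊕ V)), ?_⟩
    rintro _ ⟨M, _, rfl⟩
    exact M.card_le_univ
  obtain ⟨S, hSM, hS⟩ := exists_indep_of_matching G M hM
  have hb1 := indep_diam_bound G hT.connected S hS
  have hb2 := indep_pendant_bound G hT (hn ▸ hn2) S hS
  rw [hSM, hcard, ← hn] at hb1 hb2
  rw [← hd] at hb1
  rw [← hp] at hb2
  generalize G.whisker.inducedMatchingNum = m at *
  refine le_min ?_ ?_
  · have h : 2 * (m : ℤ) + d + 1 < 2 * n + 2 := by omega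
    have h' : 2 * (m : ℚ) + d + 1 < 2 * n + 2 := by exact_mod_cast h
    rw [Int.le_ceil_iff]
    push_cast
    linarith
  · have h' : 3 * (m : ℚ) + 2 ≤ 2 * n + p := by exact_mod_cast hb2
    rw [Int.le_floor]
    push_cast
    linarith
end

section
/- Let G be a finite simple graph on n ≥ 2 vertices, let G₁ be the whiskered graph obtained by attaching one new pendant vertex to each vertex of G, and let G_a be the multi-whiskered graph obtained by attaching a_i ≥ 1 new pendant vertices to the i-th vertex of G, for an arbitrary vector a of positive integers. Then the induced matching numbers coincide: im(G₁) = im(G_a). -/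
open SimpleGraph

/-- Induced matchings can be pushed forward along any map that preserves and reflects adjacency. -/
theorem exists_inducedMatching_of_adj_iff {V W : Type*} {G : SimpleGraph V} {H : SimpleGraph W}
    (φ : V → W) (hφ : ∀ u v, H.Adj (φ u) (φ v) ↔ G.Adj u v) {n : ℕ}
    (h : ∃ M : Finset (Sym2 V), G.IsInducedMatching M ∧ M.card = n) :
    ∃ M : Finset (Sym2 W), H.IsInducedMatching M ∧ M.card = n := by
  classical
  obtain ⟨M, ⟨hE, hM⟩, rfl⟩ := h
  have key : ∀ e ∈ M, ∀ f ∈ M, e ≠ f → ∀ u ∈ e, ∀ v ∈ f, φ u ≠ φ v := by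
    intro e he f hf hef u hu v hv huv
    obtain ⟨w, rfl⟩ := Sym2.mem_iff_exists.1 hu
    have h1 : G.Adj u w := hE _ he
    have h2 : G.Adj w v := by
      rw [← hφ, ← huv, hφ]
      exact h1.symm
    exact (hM _ he f hf hef w (Sym2.mem_mk_right u w) v hv).2 h2
  refine ⟨M.image (Sym2.map φ), ⟨?_, ?_⟩, ?_⟩
  · intro e₀ he₀
    obtain ⟨e, he, rfl⟩ := Finset.mem_image.1 he₀
    have h1 := hE e he
    induction e using Sym2.ind with
    | _ x y => exact (hφ x y).2 h1
  · intro e₀ he₀ f₀ hf₀ hef u₀ hu₀ v₀ hv₀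
    obtain ⟨e, he, rfl⟩ := Finset.mem_image.1 he₀
    obtain ⟨f, hf, rfl⟩ := Finset.mem_image.1 hf₀
    obtain ⟨u, hu, rfl⟩ := Sym2.mem_map.1 hu₀
    obtain ⟨v, hv, rfl⟩ := Sym2.mem_map.1 hv₀
    have hne : e ≠ f := fun h => hef (by rw [h])
    exact ⟨key e he f hf hne u hu v hv, fun h =>
      (hM e he f hf hne u hu v hv).2 ((hφ u v).1 h)⟩
  · refine Finset.card_image_of_injOn ?_
    intro e he f hf hef
    by_contra hne
    have hu := e.out_fst_mem
    have hm : φ e.out.1 ∈ Sym2.map φ f := by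
      rw [← hef]
      exact Sym2.mem_map.2 ⟨_, hu, rfl⟩
    obtain ⟨v, hv, hvu⟩ := Sym2.mem_map.1 hm
    exact key e he f hf hne _ hu v hv hvu.symm

/-- The induced matching number of the whiskered graph equals that of any
multi-whiskered graph: `im(G₁) = im(G_a)`. -/
theorem whisker_im_eq_multiWhisker_im {V : Type*} [Fintype V] (G : SimpleGraph V)
    (hn2 : 2 ≤ Fintype.card V) (a : V → ℕ) (ha : ∀ v, 1 ≤ a v) :
    G.whisker.inducedMatchingNum = (G.multiWhisker a).inducedMatchingNum := by
  unfold SimpleGraph.inducedMatchingNum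
  congr 1
  ext n
  constructor
  · refine exists_inducedMatching_of_adj_iff
      (Sum.map id fun v => (⟨v, ⟨0, ha v⟩⟩ : Σ v : V, Fin (a v))) ?_
    rintro (u | u) (v | v) <;> simp [SimpleGraph.whisker, SimpleGraph.multiWhisker]
  · refine exists_inducedMatching_of_adj_iff (Sum.map id Sigma.fst) ?_
    rintro (u | u) (v | v) <;> simp [SimpleGraph.whisker, SimpleGraph.multiWhisker]
end

section
/- Let G be a finite simple graph and let G_a be the multi-whiskered graph obtained by attaching a_i ≥ 1 new pendant vertices to the i-th vertex of G, for an arbitrary vector a of positive integers. Then the induced matching number of G_a equals the independence number of G: im(G_a) = α(G). -/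
open SimpleGraph

lemma multiWhisker_exists_inl {V : Type*} (G : SimpleGraph V) (a : V → ℕ)
    (e : Sym2 (V ⊕ Σ v : V, Fin (a v))) (he : e ∈ (G.multiWhisker a).edgeSet) :
    ∃ v : V, Sum.inl v ∈ e := by
  induction e using Sym2.ind with
  | _ x y =>
    rcases x with x | x
    · exact ⟨x, by simp⟩
    · rcases y with y | y
      · exact ⟨y, by simp⟩
      · simp [SimpleGraph.multiWhisker] at he

/-- The induced matching number of a multi-whiskered graph equals the independence
number of the underlying graph: `im(G_a) = α(G)`. -/
theorem multiWhisker_im_eq_indepNumber {V : Type*} [Fintype V] (G : SimpleGraph V)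
    (a : V → ℕ) (ha : ∀ v, 1 ≤ a v) :
    (G.multiWhisker a).inducedMatchingNum = G.indepNumber := by
  classical
  unfold SimpleGraph.inducedMatchingNum SimpleGraph.indepNumber
  congr 1
  ext n
  constructor
  · rintro ⟨M, ⟨hE, hM⟩, rfl⟩
    have hex : ∀ e, ∃ v : V, e ∈ M → Sum.inl v ∈ e := by
      intro e
      by_cases he : e ∈ M
      · obtain ⟨v, hv⟩ := multiWhisker_exists_inl G a e (hE e he)
        exact ⟨v, fun _ => hv⟩
      · rcases e.out.1 with v | w
        · exact ⟨v, fun h => absurd h he⟩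
        · exact ⟨w.1, fun h => absurd h he⟩
    choose f hf using hex
    refine ⟨M.image f, ?_, ?_⟩
    · intro u hu v hv huv
      obtain ⟨e, he, rfl⟩ := Finset.mem_image.1 hu
      obtain ⟨e', he', rfl⟩ := Finset.mem_image.1 hv
      have hne : e ≠ e' := by
        rintro rfl
        exact G.loopless.irrefl _ huv
      refine (hM e he e' he' hne _ (hf e he) _ (hf e' he')).2 ?_
      simp [SimpleGraph.multiWhisker, huv, huv.ne]
    · apply Finset.card_image_of_injOn
      intro e he e' he' h
      by_contra hne
      exact (hM e he e' he' hne _ (hf e he) _ (hf e' he')).1 (by rw [h])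
  · rintro ⟨s, hs, rfl⟩
    let g : V → Sym2 (V ⊕ Σ v : V, Fin (a v)) :=
      fun v => s(Sum.inl v, Sum.inr ⟨v, ⟨0, ha v⟩⟩)
    refine ⟨s.image g, ⟨?_, ?_⟩, ?_⟩
    · intro e he
      obtain ⟨v, hv, rfl⟩ := Finset.mem_image.1 he
      simp [g, SimpleGraph.multiWhisker]
    · intro e he e' he' hne x hx y hy
      obtain ⟨u, hu, rfl⟩ := Finset.mem_image.1 he
      obtain ⟨v, hv, rfl⟩ := Finset.mem_image.1 he'
      have huv : u ≠ v := fun h => hne (by rw [h])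
      have h1 := hs u hu v hv
      have h2 := hs v hv u hu
      simp only [g, Sym2.mem_iff] at hx hy
      rcases hx with rfl | rfl <;> rcases hy with rfl | rfl <;>
        simp [SimpleGraph.multiWhisker, huv, huv.symm, h1, h2]
    · apply Finset.card_image_of_injective
      intro u v h
      simp [g] at h
      exact h.1
end
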